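/- Let k be a field and n > 2 an integer; set R = k[X]/(X^n) and, for 1 ≤ i ≤ n, B_i = k[X]/(X^i) regarded as an R-module; for an element v of an R-module, ⟨v⟩ denotes the cyclic R-submodule generated by v. Consider the following pairs: (0, B_i) for 1 ≤ i ≤ n; (⟨X^{i-1}⟩, B_i) for 1 ≤ i ≤ n; (⟨X^{i-2}⟩, B_i) for 2 ≤ i ≤ n; and (⟨(X^{i-2}, X^{j-1})⟩, B_i ⊕ B_j) for 3 ≤ i ≤ n and 1 ≤ j ≤ i−2. These n(n+3)/2 pairs are indecomposable objects of S_2(k[T]/T^n), they are pairwise non-isomorphic, and every indecomposable object of S_2(k[T]/T^n) is isomorphic to one of them. In particular, S_2(k[T]/T^n) has exactly n(n+3)/2 isomorphism classes of indecomposable objects. -/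

import Mathlib

open Polynomial

noncomputable section

/-- An object of the submodule category `Sₘ(k[T]/Tⁿ)`: a pair `(A, B)` where `B` is a
finite-dimensional module over `R = k[X]/(Xⁿ)` — encoded as a finite `k[X]`-module
annihilated by `Xⁿ` — together with an `R`-submodule `A ⊆ B` with `Xᵐ • A = 0`. -/
structure SPair (k : Type) [Field k] (m n : ℕ) : Type 1 where
  B : Type
  [addCommGroup : AddCommGroup B]
  [module : Module (Polynomial k) B]
  [finite : Module.Finite (Polynomial k) B]
  bound : ∀ b : B, (X : Polynomial k) ^ n • b = 0
  A : Submodule (Polynomial k) B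
  subBound : ∀ a ∈ A, (X : Polynomial k) ^ m • a = 0

attribute [instance] SPair.addCommGroup SPair.module SPair.finite

namespace SPair

variable {k : Type} [Field k] {m n : ℕ}

/-- Isomorphism of pairs: an `R`-linear isomorphism of the ambient modules mapping the one
submodule onto the other. -/
def Iso (M N : SPair k m n) : Prop :=
  ∃ e : M.B ≃ₗ[Polynomial k] N.B, M.A.map e.toLinearMap = N.A

/-- A pair `(A, B)` is indecomposable if `B ≠ 0` and for every internal direct sum
decomposition `B = B₁ ⊕ B₂` with `A = (A ∩ B₁) ⊕ (A ∩ B₂)`, one of `B₁`, `B₂` is zero. -/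
def Indec (M : SPair k m n) : Prop :=
  (∃ b : M.B, b ≠ 0) ∧
    ∀ B₁ B₂ : Submodule (Polynomial k) M.B,
      B₁ ⊓ B₂ = ⊥ → B₁ ⊔ B₂ = ⊤ → M.A = M.A ⊓ B₁ ⊔ M.A ⊓ B₂ → B₁ = ⊥ ∨ B₂ = ⊥

end SPair

/-- The cyclic module `k[X]/(Xⁱ)`, as a module over `k[X]`. -/
abbrev Bq (k : Type) [Field k] (i : ℕ) : Type :=
  Polynomial k ⧸ (Ideal.span {(X : Polynomial k) ^ i} : Ideal (Polynomial k))

instance (k : Type) [Field k] (i : ℕ) : Module.Finite (Polynomial k) (Bq k i) :=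
  Module.Finite.of_surjective (Submodule.mkQ _) (Submodule.mkQ_surjective _)

theorem Bq_bound (k : Type) [Field k] {i n : ℕ} (h : i ≤ n) (b : Bq k i) :
    (X : Polynomial k) ^ n • b = 0 := by
  obtain ⟨p, rfl⟩ := Submodule.Quotient.mk_surjective _ b
  rw [← Submodule.Quotient.mk_smul, Submodule.Quotient.mk_eq_zero, smul_eq_mul]
  exact Ideal.mem_span_singleton.mpr ((pow_dvd_pow X h).mul_right p)

theorem Bq_smul_mk (k : Type) [Field k] {i j r : ℕ} (h : i ≤ j + r) :
    (X : Polynomial k) ^ r • (Submodule.Quotient.mk (X ^ j) : Bq k i) = 0 := by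
  rw [← Submodule.Quotient.mk_smul, Submodule.Quotient.mk_eq_zero, smul_eq_mul, ← pow_add]
  exact Ideal.mem_span_singleton.mpr (pow_dvd_pow X (by omega))

theorem span_smul_eq_zero {k : Type} [Field k] {B : Type} [AddCommGroup B]
    [Module (Polynomial k) B] (r : Polynomial k) {S : Set B} (h : ∀ v ∈ S, r • v = 0) :
    ∀ a ∈ Submodule.span (Polynomial k) S, r • a = 0 := by
  intro a ha
  induction ha using Submodule.span_induction with
  | mem v hv => exact h v hv
  | zero => simp
  | add x y _ _ hx hy => rw [smul_add, hx, hy, add_zero]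
  | smul c x _ hx => rw [smul_smul, mul_comm, ← smul_smul, hx, smul_zero]

/-- The pair `(0 ⊆ k[X]/(Xⁱ))` as an object of `Sₘ(k[T]/Tⁿ)`. -/
def pairZero (k : Type) [Field k] (m n i : ℕ) (h : i ≤ n) : SPair k m n where
  B := Bq k i
  bound := fun b => Bq_bound k h b
  A := ⊥
  subBound := fun a ha => by rw [(Submodule.mem_bot _).mp ha, smul_zero]

/-- The pair `(⟨Xʲ⟩ ⊆ k[X]/(Xⁱ))` as an object of `Sₘ(k[T]/Tⁿ)`. -/
def pairCyc (k : Type) [Field k] (m n i j : ℕ) (h : i ≤ n) (hj : i ≤ j + m) : SPair k m n where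
  B := Bq k i
  bound := fun b => Bq_bound k h b
  A := Submodule.span (Polynomial k) {(Submodule.Quotient.mk (X ^ j) : Bq k i)}
  subBound := fun a ha =>
    span_smul_eq_zero _
      (fun v hv => by rw [Set.mem_singleton_iff] at hv; rw [hv]; exact Bq_smul_mk k hj) a ha

/-- The pair `(⟨(Xᵃ, Xᵇ)⟩ ⊆ k[X]/(Xⁱ) ⊕ k[X]/(Xʲ))` as an object of `Sₘ(k[T]/Tⁿ)`. -/
def pairProd (k : Type) [Field k] (m n i j a b : ℕ) (hi : i ≤ n) (hj : j ≤ n)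
    (ha : i ≤ a + m) (hb : j ≤ b + m) : SPair k m n where
  B := Bq k i × Bq k j
  bound := fun x => Prod.ext (Bq_bound k hi x.1) (Bq_bound k hj x.2)
  A := Submodule.span (Polynomial k)
        {((Submodule.Quotient.mk (X ^ a) : Bq k i), (Submodule.Quotient.mk (X ^ b) : Bq k j))}
  subBound := fun x hx =>
    span_smul_eq_zero _
      (fun v hv => by
        rw [Set.mem_singleton_iff] at hv
        rw [hv]
        exact Prod.ext (Bq_smul_mk k ha) (Bq_smul_mk k hb)) x hx


section Helpers

variable {k : Type} [Field k]

theorem Bq_mk_eq_iff {i : ℕ} {p q : Polynomial k} :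
    ((Submodule.Quotient.mk p : Bq k i) = Submodule.Quotient.mk q) ↔
      ∀ d < i, p.coeff d = q.coeff d := by
  rw [Submodule.Quotient.eq, Ideal.mem_span_singleton, X_pow_dvd_iff]
  simp [sub_eq_zero]

theorem Bq_mk_eq_zero_iff {i : ℕ} {p : Polynomial k} :
    ((Submodule.Quotient.mk p : Bq k i) = 0) ↔ ∀ d < i, p.coeff d = 0 := by
  rw [Submodule.Quotient.mk_eq_zero, Ideal.mem_span_singleton, X_pow_dvd_iff]

/-- Elements of `k[X]/(Xⁱ)` killed by `Xˢ` are in the span of `X^(i-s)`. -/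
theorem Bq_mem_span {i s : ℕ} (hs : s ≤ i) (y : Bq k i)
    (hy : (X : Polynomial k) ^ s • y = 0) :
    ∃ r : Polynomial k, y = r • (Submodule.Quotient.mk (X ^ (i - s)) : Bq k i) := by
  obtain ⟨p, rfl⟩ := Submodule.Quotient.mk_surjective _ y
  rw [← Submodule.Quotient.mk_smul, smul_eq_mul, Bq_mk_eq_zero_iff] at hy
  have : (X : Polynomial k) ^ (i - s) ∣ p := by
    rw [X_pow_dvd_iff]
    intro d hd
    have := hy (d + s) (by omega)
    rwa [coeff_X_pow_mul] at this
  obtain ⟨r, rfl⟩ := this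
  exact ⟨r, by rw [← Submodule.Quotient.mk_smul, smul_eq_mul, mul_comm]⟩

/-- Socle elements of `k[X]/(Xⁱ)`. -/
theorem Bq_socle {i : ℕ} (hi : 1 ≤ i) (y : Bq k i) (hy : (X : Polynomial k) • y = 0) :
    ∃ c : k, y = (C c) • (Submodule.Quotient.mk (X ^ (i - 1)) : Bq k i) := by
  obtain ⟨r, rfl⟩ := Bq_mem_span hi y (by simpa using hy)
  refine ⟨r.coeff 0, ?_⟩
  rw [← Submodule.Quotient.mk_smul, ← Submodule.Quotient.mk_smul, Bq_mk_eq_iff]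
  intro d hd
  simp only [smul_eq_mul, coeff_mul_X_pow']
  by_cases h : d = i - 1
  · subst h; simp
  · have : ¬ (i - 1 ≤ d) := by omega
    simp [this]

theorem Bq_mk_ne_zero {i a : ℕ} (h : a < i) :
    (Submodule.Quotient.mk (X ^ a) : Bq k i) ≠ 0 := by
  rw [Ne, Bq_mk_eq_zero_iff]
  intro h'
  simpa using h' a h

/-- In an `X`-power torsion module a nonzero element has a nonzero multiple in the socle. -/
theorem exists_socle_mul {B : Type} [AddCommGroup B] [Module (Polynomial k) B] {n : ℕ} (x : B)
    (hx : x ≠ 0) (hn : (X : Polynomial k) ^ n • x = 0) :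
    ∃ t : ℕ, (X : Polynomial k) ^ t • x ≠ 0 ∧ (X : Polynomial k) • (X : Polynomial k) ^ t • x = 0 := by
  induction n with
  | zero => simp at hn; exact absurd hn hx
  | succ n ih =>
    by_cases h : (X : Polynomial k) ^ n • x = 0
    · exact ih h
    · exact ⟨n, h, by rw [smul_smul, ← pow_succ']; exact hn⟩

theorem injective_of_socle {B B' : Type} [AddCommGroup B] [Module (Polynomial k) B]
    [AddCommGroup B'] [Module (Polynomial k) B'] {n : ℕ}
    (hn : ∀ x : B, (X : Polynomial k) ^ n • x = 0) (f : B →ₗ[Polynomial k] B')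
    (hf : ∀ x : B, (X : Polynomial k) • x = 0 → f x = 0 → x = 0) : Function.Injective f := by
  rw [injective_iff_map_eq_zero]
  intro x hx
  by_contra hne
  obtain ⟨t, h1, h2⟩ := exists_socle_mul x hne (hn x)
  exact h1 (hf _ h2 (by rw [map_smul, hx, smul_zero]))

/-- The map `k[X]/(Xⁱ) → B` sending `1` to `b`. -/
def iotaMap {B : Type} [AddCommGroup B] [Module (Polynomial k) B] (i : ℕ) (b : B)
    (hb : (X : Polynomial k) ^ i • b = 0) : Bq k i →ₗ[Polynomial k] B :=
  Submodule.liftQ _ (LinearMap.toSpanSingleton (Polynomial k) B b) (by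
    rw [Ideal.span, Submodule.span_le]
    intro p hp
    rw [Set.mem_singleton_iff] at hp
    subst hp
    simpa using hb)

theorem iotaMap_mk {B : Type} [AddCommGroup B] [Module (Polynomial k) B] (i : ℕ) (b : B)
    (hb : (X : Polynomial k) ^ i • b = 0) (p : Polynomial k) :
    iotaMap i b hb (Submodule.Quotient.mk p) = p • b := by
  exact (Submodule.liftQ_apply _ _ _).trans (by simp)

section Functional

variable {B : Type} [AddCommGroup B] [Module (Polynomial k) B] [Module k B]
  [IsScalarTower k (Polynomial k) B]

theorem C_smul_eq (c : k) (x : B) : (C c : Polynomial k) • x = c • x := by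
  rw [← Polynomial.algebraMap_eq, algebraMap_smul]

/-- Polynomial representative of the map to `k[X]/(Xⁱ)` induced by a functional. -/
def rhoPoly (i : ℕ) (L : B →ₗ[k] k) (x : B) : Polynomial k :=
  ∑ t ∈ Finset.range i, C (L ((X : Polynomial k) ^ (i - 1 - t) • x)) * X ^ t

theorem rhoPoly_coeff (i : ℕ) (L : B →ₗ[k] k) (x : B) {d : ℕ} (hd : d < i) :
    (rhoPoly i L x).coeff d = L ((X : Polynomial k) ^ (i - 1 - d) • x) := by
  simp only [rhoPoly, finsetSum_coeff, coeff_C_mul, coeff_X_pow]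
  rw [Finset.sum_eq_single d]
  · simp
  · intro b _ hb
    simp [Ne.symm hb]
  · intro h; exact absurd (Finset.mem_range.mpr hd) h

theorem rhoPoly_smul (i : ℕ) (L : B →ₗ[k] k) (hL : ∀ x : B, L ((X : Polynomial k) ^ i • x) = 0)
    (p : Polynomial k) : ∀ x : B,
    (Submodule.Quotient.mk (rhoPoly i L (p • x)) : Bq k i) =
      p • Submodule.Quotient.mk (rhoPoly i L x) := by
  have hX : ∀ x : B, (Submodule.Quotient.mk (rhoPoly i L ((X : Polynomial k) • x)) : Bq k i) =
      (X : Polynomial k) • Submodule.Quotient.mk (rhoPoly i L x) := by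
    intro x
    rw [← Submodule.Quotient.mk_smul, Bq_mk_eq_iff]
    intro d hd
    rw [rhoPoly_coeff _ _ _ hd, smul_eq_mul, smul_smul, ← pow_succ]
    cases d with
    | zero =>
      rw [show i - 1 - 0 + 1 = i by omega, hL]
      simp
    | succ e =>
      rw [coeff_X_mul, rhoPoly_coeff _ _ _ (by omega : e < i)]
      congr 3
      omega
  induction p using Polynomial.induction_on with
  | C a =>
    intro x
    rw [← Submodule.Quotient.mk_smul, Bq_mk_eq_iff]
    intro d hd
    rw [rhoPoly_coeff _ _ _ hd, smul_eq_mul, coeff_C_mul, rhoPoly_coeff _ _ _ hd, smul_comm,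
      C_smul_eq, map_smul, smul_eq_mul]
  | add p q hp hq =>
    intro x
    rw [add_smul, add_smul, ← hp, ← hq, ← Submodule.Quotient.mk_add, Bq_mk_eq_iff]
    intro d hd
    rw [coeff_add, rhoPoly_coeff _ _ _ hd, rhoPoly_coeff _ _ _ hd, rhoPoly_coeff _ _ _ hd,
      smul_add, map_add]
  | monomial m a h =>
    intro x
    rw [pow_succ, ← mul_assoc, mul_smul, h, hX, ← mul_smul]

/-- The map `B → k[X]/(Xⁱ)` induced by a functional vanishing on `Xⁱ B`. -/
def rhoMap (i : ℕ) (L : B →ₗ[k] k) (hL : ∀ x : B, L ((X : Polynomial k) ^ i • x) = 0) :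
    B →ₗ[Polynomial k] Bq k i where
  toFun x := Submodule.Quotient.mk (rhoPoly i L x)
  map_add' x y := by
    rw [← Submodule.Quotient.mk_add, Bq_mk_eq_iff]
    intro d hd
    rw [coeff_add, rhoPoly_coeff _ _ _ hd, rhoPoly_coeff _ _ _ hd, rhoPoly_coeff _ _ _ hd,
      smul_add, map_add]
  map_smul' p x := rhoPoly_smul i L hL p x

theorem rhoMap_eq_zero {i : ℕ} (hi : 1 ≤ i) (L : B →ₗ[k] k)
    (hL : ∀ x : B, L ((X : Polynomial k) ^ i • x) = 0) (x : B) (hx : rhoMap i L hL x = 0) :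
    L x = 0 := by
  have h := (Bq_mk_eq_zero_iff (k := k)).mp hx (i - 1) (by omega)
  rw [rhoPoly_coeff _ _ _ (by omega)] at h
  simpa using h

theorem rhoMap_eq_mk {i : ℕ} (L : B →ₗ[k] k)
    (hL : ∀ x : B, L ((X : Polynomial k) ^ i • x) = 0) (x : B) (p : Polynomial k)
    (h : ∀ t < i, L ((X : Polynomial k) ^ t • x) = p.coeff (i - 1 - t)) :
    rhoMap i L hL x = Submodule.Quotient.mk p := by
  refine (Bq_mk_eq_iff (k := k)).mpr ?_
  intro d hd
  rw [rhoPoly_coeff _ _ _ hd, h _ (by omega)]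
  congr 1
  omega

end Functional

instance Bq_artinian (i : ℕ) : IsArtinian (Polynomial k) (Bq k i) := by
  have : Module.Finite k (Bq k i) := (monic_X_pow (R := k) i).finite_quotient
  exact isArtinian_of_tower k inferInstance

theorem Bq_finite (i : ℕ) : Module.Finite k (Bq k i) := (monic_X_pow (R := k) i).finite_quotient

theorem Bq_finrank (i : ℕ) : Module.finrank k (Bq k i) = i := by
  have := finrank_quotient_span_eq_natDegree (f := (X ^ i : Polynomial k))
  simpa using this

theorem iso_of_split {m n : ℕ} (M : SPair k m n) {N : Type} [AddCommGroup N]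
    [Module (Polynomial k) N] [IsArtinian (Polynomial k) N] (D : Submodule (Polynomial k) N)
    (ι : N →ₗ[Polynomial k] M.B) (ρ : M.B →ₗ[Polynomial k] N)
    (hι : ∀ p ∈ D, ι p ∈ M.A) (hρ : ∀ a ∈ M.A, ρ a ∈ D)
    (hinj : Function.Injective (ρ ∘ₗ ι)) (hne : ∃ p : N, p ≠ 0) (hM : M.Indec) :
    ∃ e : M.B ≃ₗ[Polynomial k] N, M.A.map e.toLinearMap = D := by
  have hsurj : Function.Surjective (ρ ∘ₗ ι) := IsArtinian.surjective_of_injective_endomorphism _ hinj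
  have hA : ∀ p ∈ D, (ρ ∘ₗ ι) p ∈ D := fun p hp => hρ _ (hι _ hp)
  have hgi : Function.Injective ((ρ ∘ₗ ι).restrict hA) := by
    intro x y hxy
    exact Subtype.ext (hinj (congrArg Subtype.val hxy))
  have hgs := IsArtinian.surjective_of_injective_endomorphism _ hgi
  have hgs' : ∀ p ∈ D, ∃ q ∈ D, ρ (ι q) = p := by
    intro p hp
    obtain ⟨q, hq⟩ := hgs ⟨p, hp⟩
    exact ⟨q, q.2, congrArg Subtype.val hq⟩
  have key := hM.2 (LinearMap.range ι) (LinearMap.ker ρ) ?_ ?_ ?_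
  · rcases key with h | h
    · exfalso
      obtain ⟨p, hp⟩ := hne
      apply hp
      apply hinj
      have : ι p = 0 := by
        have : ι p ∈ LinearMap.range ι := ⟨p, rfl⟩
        rw [h] at this
        exact (Submodule.mem_bot _).mp this
      simp [this]
    · have hb : Function.Bijective ρ := by
        refine ⟨LinearMap.ker_eq_bot.mp h, ?_⟩
        intro p
        obtain ⟨q, hq⟩ := hsurj p
        exact ⟨ι q, hq⟩
      refine ⟨LinearEquiv.ofBijective ρ hb, ?_⟩
      apply le_antisymm
      · rintro _ ⟨a, ha, rfl⟩
        exact hρ a ha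
      · intro p hp
        obtain ⟨q, hq, hqp⟩ := hgs' p hp
        exact ⟨ι q, hι q hq, hqp⟩
  · rw [eq_bot_iff]
    rintro _ ⟨⟨p, rfl⟩, hp⟩
    have : p = 0 := hinj (by simpa using hp)
    simp [this]
  · rw [eq_top_iff]
    intro x _
    obtain ⟨q, hq⟩ := hsurj (ρ x)
    rw [Submodule.mem_sup]
    refine ⟨ι q, ⟨q, rfl⟩, x - ι q, ?_, by abel⟩
    rw [LinearMap.mem_ker, map_sub, ← hq]
    simp
  · apply le_antisymm
    · intro a ha
      obtain ⟨q, hq, hqa⟩ := hgs' (ρ a) (hρ a ha)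
      rw [Submodule.mem_sup]
      refine ⟨ι q, ⟨hι q hq, ⟨q, rfl⟩⟩, a - ι q, ⟨sub_mem ha (hι q hq), ?_⟩, by abel⟩
      change ρ (a - ι q) = 0
      rw [map_sub, hqa, sub_self]
    · exact sup_le inf_le_left inf_le_left

section Functional2

variable {B : Type} [AddCommGroup B] [Module (Polynomial k) B] [Module k B]
  [IsScalarTower k (Polynomial k) B]

/-- Multiplication by a polynomial as a `k`-linear map. -/
def mulMap (p : Polynomial k) : B →ₗ[k] B :=
  (LinearMap.lsmul (Polynomial k) B p).restrictScalars k

theorem mulMap_apply (p : Polynomial k) (x : B) : mulMap p x = p • x := rfl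

theorem exists_functional (U : Submodule k B) {v : B} (hv : v ∉ U) :
    ∃ L : B →ₗ[k] k, L v ≠ 0 ∧ ∀ u ∈ U, L u = 0 := by
  obtain ⟨f, h1, h2⟩ := Submodule.exists_le_ker_of_notMem hv
  exact ⟨f, h1, fun u hu => h2 hu⟩

theorem exists_rho_aux {i : ℕ} (hi : 1 ≤ i) (b : B) (hb : (X : Polynomial k) ^ i • b = 0)
    (hb' : ∀ x : B, (X : Polynomial k) ^ i • x ≠ (X : Polynomial k) ^ (i - 1) • b) :
    ∃ ρ : B →ₗ[Polynomial k] Bq k i, Function.Injective (ρ ∘ₗ iotaMap i b hb) := by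
  obtain ⟨L, hL1, hL2⟩ := exists_functional (LinearMap.range (mulMap (B := B) ((X : Polynomial k) ^ i)))
    (v := (X : Polynomial k) ^ (i - 1) • b) (by rintro ⟨x, hx⟩; exact hb' x hx)
  have hL : ∀ x : B, L ((X : Polynomial k) ^ i • x) = 0 := fun x => hL2 _ ⟨x, rfl⟩
  refine ⟨rhoMap i L hL, injective_of_socle (n := i) (Bq_bound k le_rfl) _ ?_⟩
  intro y hy hy'
  obtain ⟨c, rfl⟩ := Bq_socle hi y hy
  have h := rhoMap_eq_zero hi L hL _ hy'
  rw [map_smul, iotaMap_mk, C_smul_eq, map_smul, smul_eq_mul, mul_eq_zero] at h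
  rcases h with h | h
  · simp [h]
  · exact absurd h hL1

theorem exists_rho4_aux (A : Submodule (Polynomial k) B)
    (hA : ∀ a ∈ A, (X : Polynomial k) ^ 2 • a = 0) {i j : ℕ} (hj : 1 ≤ j) (hij : j + 2 ≤ i)
    (b c a : B) (hb : (X : Polynomial k) ^ i • b = 0) (hc : (X : Polynomial k) ^ j • c = 0)
    (haA : a ∈ A) (ha : (X : Polynomial k) ^ (i - 2) • b + (X : Polynomial k) ^ (j - 1) • c = a)
    (hcond : ∀ x y : B, (X : Polynomial k) ^ j • y ∈ A →
      (X : Polynomial k) • a ≠ (X : Polynomial k) ^ i • x +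
        (X : Polynomial k) • (X : Polynomial k) ^ j • y) :
    ∃ ρ : B →ₗ[Polynomial k] (Bq k i × Bq k j),
      Function.Injective (ρ ∘ₗ ((iotaMap i b hb).coprod (iotaMap j c hc))) ∧
      ∀ a' ∈ A, ∃ r : Polynomial k, ρ a' = r •
        ((Submodule.Quotient.mk (X ^ (i - 2)) : Bq k i),
          (Submodule.Quotient.mk (X ^ (j - 1)) : Bq k j)) := by
  have hXa : (X : Polynomial k) • a = (X : Polynomial k) ^ (i - 1) • b := by
    rw [← ha, smul_add, smul_smul, smul_smul, ← pow_succ', ← pow_succ',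
      show j - 1 + 1 = j by omega, hc, add_zero, show i - 2 + 1 = i - 1 by omega]
  -- the first functional
  obtain ⟨L, hL1, hL2⟩ := exists_functional
    (LinearMap.range (mulMap (B := B) ((X : Polynomial k) ^ i)) ⊔
      (A.restrictScalars k ⊓ LinearMap.range (mulMap (B := B) ((X : Polynomial k) ^ j))).map
        (mulMap (X : Polynomial k)))
    (v := (X : Polynomial k) • a) (by
      rw [Submodule.mem_sup]
      rintro ⟨_, ⟨x, rfl⟩, _, ⟨_, ⟨h, ⟨y, rfl⟩⟩, rfl⟩, hxy⟩
      exact hcond x y h hxy.symm)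
  have hL : ∀ x : B, L ((X : Polynomial k) ^ i • x) = 0 := fun x =>
    hL2 _ (Submodule.mem_sup_left ⟨x, rfl⟩)
  have hLA : ∀ y : B, (X : Polynomial k) ^ j • y ∈ A →
      L ((X : Polynomial k) • (X : Polynomial k) ^ j • y) = 0 := fun y hy =>
    hL2 _ (Submodule.mem_sup_right ⟨_, ⟨hy, ⟨y, rfl⟩⟩, rfl⟩)
  -- the second functional
  obtain ⟨K₀, hK1, hK2⟩ := exists_functional
    ((A.restrictScalars k ⊓ LinearMap.ker (L ∘ₗ mulMap (X : Polynomial k))) ⊔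
      LinearMap.range (mulMap (B := B) ((X : Polynomial k) ^ j)))
    (v := a) (by
      rw [Submodule.mem_sup]
      rintro ⟨z, ⟨hzA, hz⟩, _, ⟨y, rfl⟩, hzy⟩
      apply hL1
      have hy : (X : Polynomial k) ^ j • y = a - z := by
        rw [← hzy, mulMap_apply]; abel
      have h := hLA y (by rw [hy]; exact sub_mem haA hzA)
      rw [hy, smul_sub, map_sub, sub_eq_zero] at h
      rw [h]
      exact hz)
  set K : B →ₗ[k] k := (L ((X : Polynomial k) • a) / K₀ a) • K₀ with hKdef
  have hKa : K a = L ((X : Polynomial k) • a) := by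
    simp [hKdef, hK1]
  have hK : ∀ x : B, K ((X : Polynomial k) ^ j • x) = 0 := fun x => by
    simp only [hKdef, LinearMap.smul_apply]
    have h : K₀ ((X : Polynomial k) ^ j • x) = 0 := hK2 _ (Submodule.mem_sup_right ⟨x, rfl⟩)
    rw [h, smul_zero]
  have hKz : ∀ z ∈ A, L ((X : Polynomial k) • z) = 0 → K z = 0 := fun z hz hz' => by
    simp only [hKdef, LinearMap.smul_apply]
    rw [hK2 _ (Submodule.mem_sup_left ⟨hz, hz'⟩), smul_zero]
  have hKA : ∀ z ∈ A, K z = L ((X : Polynomial k) • z) := by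
    intro z hz
    have h := hKz (z - (L ((X : Polynomial k) • z) / L ((X : Polynomial k) • a)) • a)
      (by
        rw [← C_smul_eq]
        exact sub_mem hz (A.smul_mem _ haA))
      (by
        rw [← C_smul_eq, smul_sub, smul_comm X (C _) a, map_sub, C_smul_eq, map_smul L, smul_eq_mul,
          div_mul_cancel₀ _ hL1, sub_self])
    rw [map_sub, map_smul, hKa, smul_eq_mul, div_mul_cancel₀ _ hL1, sub_eq_zero] at h
    exact h
  have hpow : ∀ z ∈ A, ∀ t, 2 ≤ t → (X : Polynomial k) ^ t • z = 0 := by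
    intro z hz t ht
    obtain ⟨s, rfl⟩ := Nat.exists_eq_add_of_le' ht
    rw [pow_add, mul_smul, hA z hz, smul_zero]
  refine ⟨(rhoMap i L hL).prod (rhoMap j K hK),
    injective_of_socle (n := i) (fun x => Prod.ext (Bq_bound k le_rfl _) (Bq_bound k (by omega) _)) _ ?_,
    ?_⟩
  · rintro ⟨y, z⟩ hyz hyz'
    obtain ⟨α, rfl⟩ := Bq_socle (by omega : 1 ≤ i) y (congrArg Prod.fst hyz)
    obtain ⟨β, rfl⟩ := Bq_socle hj z (congrArg Prod.snd hyz)
    have h1 := rhoMap_eq_zero (by omega : 1 ≤ i) L hL _ (congrArg Prod.fst hyz')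
    have h2 := rhoMap_eq_zero hj K hK _ (congrArg Prod.snd hyz')
    rw [LinearMap.coprod_apply, map_smul, map_smul, iotaMap_mk, iotaMap_mk, C_smul_eq, C_smul_eq,
      map_add] at h1 h2
    rw [map_smul L α, map_smul L β, smul_eq_mul, smul_eq_mul] at h1
    rw [map_smul K α, map_smul K β, smul_eq_mul, smul_eq_mul] at h2
    have hKb : ∀ t, j ≤ t → K ((X : Polynomial k) ^ t • b) = 0 := by
      intro t ht
      obtain ⟨s, rfl⟩ := Nat.exists_eq_add_of_le ht
      rw [pow_add, mul_smul, hK]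
    have hKc : K ((X : Polynomial k) ^ (j - 1) • c) ≠ 0 := by
      have : K a = K ((X : Polynomial k) ^ (j - 1) • c) := by
        rw [← ha, map_add, hKb _ (by omega), zero_add]
      rw [← this, hKa]
      exact hL1
    rw [hKb _ (by omega), mul_zero, zero_add, mul_eq_zero, or_iff_left hKc] at h2
    rw [h2, zero_mul, add_zero, mul_eq_zero, ← hXa, or_iff_left hL1] at h1
    simp [h1, h2]
  · intro z hz
    refine ⟨C (L ((X : Polynomial k) • z)) + C (L z) * X, ?_⟩
    refine Prod.ext ?_ ?_
    · change rhoMap i L hL z = _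
      rw [rhoMap_eq_mk L hL z ((C (L ((X : Polynomial k) • z)) + C (L z) * X) * X ^ (i - 2))]
      · rfl
      · intro t ht
        rw [coeff_mul_X_pow']
        rcases Nat.lt_or_ge t 2 with h | h
        · interval_cases t
          · rw [if_pos (by omega), show i - 1 - 0 - (i - 2) = 1 by omega]
            simp
          · rw [if_pos (by omega), show i - 1 - 1 - (i - 2) = 0 by omega]
            simp
        · rw [if_neg (by omega), hpow z hz t h, map_zero]
    · change rhoMap j K hK z = _
      rw [rhoMap_eq_mk K hK z ((C (L ((X : Polynomial k) • z)) + C (L z) * X) * X ^ (j - 1))]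
      · rfl
      · intro t ht
        rw [coeff_mul_X_pow']
        rcases Nat.lt_or_ge t 1 with h | h
        · interval_cases t
          rw [if_pos (by omega), show j - 1 - 0 - (j - 1) = 0 by omega]
          simp [hKA z hz]
        · rw [if_neg (by omega)]
          obtain ⟨s, rfl⟩ := Nat.exists_eq_add_of_le h
          rw [pow_add, mul_comm, mul_smul, pow_one]
          rw [hKA _ (A.smul_mem _ (A.smul_mem _ hz)), smul_comm, smul_smul X X, ← pow_two, hA z hz, smul_zero,
            map_zero]

end Functional2

theorem exists_rho {B : Type} [AddCommGroup B] [Module (Polynomial k) B]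
    {i : ℕ} (hi : 1 ≤ i) (b : B) (hb : (X : Polynomial k) ^ i • b = 0)
    (hb' : ∀ x : B, (X : Polynomial k) ^ i • x ≠ (X : Polynomial k) ^ (i - 1) • b) :
    ∃ ρ : B →ₗ[Polynomial k] Bq k i, Function.Injective (ρ ∘ₗ iotaMap i b hb) := by
  let _ : Module k B := Module.compHom B (algebraMap k (Polynomial k))
  have : IsScalarTower k (Polynomial k) B := IsScalarTower.of_algebraMap_smul fun _ _ => rfl
  exact exists_rho_aux hi b hb hb'

theorem exists_rho4 {B : Type} [AddCommGroup B] [Module (Polynomial k) B]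
    (A : Submodule (Polynomial k) B)
    (hA : ∀ a ∈ A, (X : Polynomial k) ^ 2 • a = 0) {i j : ℕ} (hj : 1 ≤ j) (hij : j + 2 ≤ i)
    (b c a : B) (hb : (X : Polynomial k) ^ i • b = 0) (hc : (X : Polynomial k) ^ j • c = 0)
    (haA : a ∈ A) (ha : (X : Polynomial k) ^ (i - 2) • b + (X : Polynomial k) ^ (j - 1) • c = a)
    (hcond : ∀ x y : B, (X : Polynomial k) ^ j • y ∈ A →
      (X : Polynomial k) • a ≠ (X : Polynomial k) ^ i • x +
        (X : Polynomial k) • (X : Polynomial k) ^ j • y) :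
    ∃ ρ : B →ₗ[Polynomial k] (Bq k i × Bq k j),
      Function.Injective (ρ ∘ₗ ((iotaMap i b hb).coprod (iotaMap j c hc))) ∧
      ∀ a' ∈ A, ∃ r : Polynomial k, ρ a' = r •
        ((Submodule.Quotient.mk (X ^ (i - 2)) : Bq k i),
          (Submodule.Quotient.mk (X ^ (j - 1)) : Bq k j)) := by
  let _ : Module k B := Module.compHom B (algebraMap k (Polynomial k))
  have : IsScalarTower k (Polynomial k) B := IsScalarTower.of_algebraMap_smul fun _ _ => rfl
  exact exists_rho4_aux A hA hj hij b c a hb hc haA ha hcond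

theorem exists_last {Q : ℕ → Prop} {n : ℕ} (h0 : Q 0) (hn : ¬ Q n) :
    ∃ h < n, Q h ∧ ¬ Q (h + 1) := by
  induction n with
  | zero => exact absurd h0 hn
  | succ n ih =>
    by_cases h : Q n
    · exact ⟨n, by omega, h, hn⟩
    · obtain ⟨m, h1, h2⟩ := ih h
      exact ⟨m, by omega, h2⟩

theorem exists_height {B : Type} [AddCommGroup B] [Module (Polynomial k) B] {n : ℕ}
    (hn : ∀ x : B, (X : Polynomial k) ^ n • x = 0) (v : B) (hv : v ≠ 0) :
    ∃ i, 1 ≤ i ∧ i ≤ n ∧ ∃ b : B, (X : Polynomial k) ^ (i - 1) • b = v ∧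
      ∀ x : B, (X : Polynomial k) ^ i • x ≠ v := by
  obtain ⟨h, h1, ⟨b, hb⟩, h3⟩ := exists_last (Q := fun h => ∃ b : B, (X : Polynomial k) ^ h • b = v)
    (n := n) ⟨v, by simp⟩ (by rintro ⟨b, hb⟩; rw [hn] at hb; exact hv hb.symm)
  exact ⟨h + 1, by omega, by omega, b, hb, fun x hx => h3 ⟨x, hx⟩⟩

theorem pow_smul_of_pred {B : Type} [AddCommGroup B] [Module (Polynomial k) B] {i : ℕ} (hi : 1 ≤ i)
    (b : B) : (X : Polynomial k) ^ i • b = (X : Polynomial k) • (X : Polynomial k) ^ (i - 1) • b := by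
  rw [smul_smul, ← pow_succ', show i - 1 + 1 = i by omega]

theorem classify {n : ℕ} (M : SPair k 2 n) (hM : M.Indec) :
      (∃ i, ∃ (_ : 1 ≤ i) (hi : i ≤ n), M.Iso (pairZero k 2 n i hi)) ∨
      (∃ i, ∃ (_ : 1 ≤ i) (hi : i ≤ n), ∀ h, M.Iso (pairCyc k 2 n i (i - 1) hi h)) ∨
      (∃ i, ∃ (_ : 2 ≤ i) (hi : i ≤ n), ∀ h, M.Iso (pairCyc k 2 n i (i - 2) hi h)) ∨
      (∃ i j, ∃ (_ : 3 ≤ i) (hi : i ≤ n) (_ : 1 ≤ j) (_ : j ≤ i - 2),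
        ∀ h h' h'', M.Iso (pairProd k 2 n i j (i - 2) (j - 1) hi h h' h'')) := by
  by_cases hXA : ∀ a ∈ M.A, (X : Polynomial k) • a = 0
  · by_cases hA : M.A = ⊥
    · left
      obtain ⟨x, hx⟩ := hM.1
      obtain ⟨t, ht1, ht2⟩ := exists_socle_mul x hx (M.bound x)
      obtain ⟨i, hi1, hin, b, hb, hb'⟩ := exists_height M.bound _ ht1
      rw [← hb] at ht2 hb'
      rw [← pow_smul_of_pred hi1] at ht2
      obtain ⟨ρ, hρ⟩ := exists_rho hi1 b ht2 hb'
      refine ⟨i, hi1, hin, ?_⟩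
      refine iso_of_split M (N := Bq k i) ⊥ (iotaMap i b ht2) ρ ?_ ?_ hρ
        ⟨_, Bq_mk_ne_zero (show 0 < i by omega)⟩ hM
      · intro p hp
        rw [show p = 0 from (Submodule.mem_bot _).mp hp, map_zero]
        exact zero_mem _
      · intro p hp
        rw [hA] at hp
        rw [show p = 0 from (Submodule.mem_bot _).mp hp, map_zero]
        exact zero_mem _
    · right; left
      obtain ⟨a, haA, ha⟩ := Submodule.exists_mem_ne_zero_of_ne_bot hA
      obtain ⟨i, hi1, hin, b, hb, hb'⟩ := exists_height M.bound _ ha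
      have ht2 := hXA a haA
      rw [← hb] at ht2 hb'
      rw [← pow_smul_of_pred hi1] at ht2
      obtain ⟨ρ, hρ⟩ := exists_rho hi1 b ht2 hb'
      refine ⟨i, hi1, hin, fun _ => ?_⟩
      refine iso_of_split M (N := Bq k i)
        (Submodule.span (Polynomial k) {(Submodule.Quotient.mk (X ^ (i - 1)) : Bq k i)})
        (iotaMap i b ht2) ρ ?_ ?_ hρ ⟨_, Bq_mk_ne_zero (show 0 < i by omega)⟩ hM
      · intro p hp
        obtain ⟨r, rfl⟩ := Submodule.mem_span_singleton.mp hp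
        rw [map_smul, iotaMap_mk, hb]
        exact M.A.smul_mem _ haA
      · intro p hp
        obtain ⟨r, hr⟩ := Bq_mem_span hi1 (ρ p) (by rw [pow_one, ← map_smul, hXA p hp, map_zero])
        exact Submodule.mem_span_singleton.mpr ⟨r, hr.symm⟩
  · right; right
    push Not at hXA
    obtain ⟨a₀, ha₀, hXa₀⟩ := hXA
    obtain ⟨h, hhn, ⟨a₁, ha₁, hXa₁, b₁, hb₁⟩, hh⟩ := exists_last
      (Q := fun h => ∃ a ∈ M.A, (X : Polynomial k) • a ≠ 0 ∧
        ∃ b : M.B, (X : Polynomial k) ^ h • b = (X : Polynomial k) • a) (n := n)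
      ⟨a₀, ha₀, hXa₀, (X : Polynomial k) • a₀, by simp⟩
      (by rintro ⟨a, _, h1, b, hb⟩; rw [M.bound] at hb; exact h1 hb.symm)
    have hmax : ∀ a ∈ M.A, ∀ b : M.B, (X : Polynomial k) ^ (h + 1) • b = (X : Polynomial k) • a →
        (X : Polynomial k) • a = 0 := by
      intro a ha b hb
      by_contra hne
      exact hh ⟨a, ha, hne, b, hb⟩
    have hh1 : 1 ≤ h := by
      by_contra hlt
      have : h = 0 := by omega
      subst this
      exact hXa₀ (hmax a₀ ha₀ a₀ (by simp))
    obtain ⟨t, hth, ⟨a, ha, hXa, ⟨b, hb⟩, ⟨c, hc⟩⟩, ht⟩ := exists_last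
      (Q := fun t => ∃ a ∈ M.A, (X : Polynomial k) • a ≠ 0 ∧
        (∃ b : M.B, (X : Polynomial k) ^ h • b = (X : Polynomial k) • a) ∧
        ∃ c : M.B, (X : Polynomial k) ^ t • c = a) (n := h)
      ⟨a₁, ha₁, hXa₁, ⟨b₁, hb₁⟩, a₁, by simp⟩
      (by
        rintro ⟨a, ha, h1, _, c, hc⟩
        exact h1 (hmax a ha c (by rw [pow_succ', mul_smul, hc])))
    have hXXa : (X : Polynomial k) • (X : Polynomial k) • a = 0 := by
      rw [smul_smul, ← pow_two]; exact M.subBound a ha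
    by_cases hcase : t + 1 = h
    · left
      have hc2 : (X : Polynomial k) ^ h • c = (X : Polynomial k) • a := by
        rw [← hcase, pow_succ', mul_smul, hc]
      have hc3 : (X : Polynomial k) ^ (h + 1) • c = 0 := by
        rw [pow_succ', mul_smul, hc2, hXXa]
      obtain ⟨ρ, hρ⟩ := exists_rho (i := h + 1) (by omega) c hc3 (by
        intro x hx
        rw [Nat.add_sub_cancel, hc2] at hx
        exact hXa (hmax a ha x hx))
      refine ⟨h + 1, by omega, by omega, fun _ => ?_⟩
      refine iso_of_split M (N := Bq k (h + 1))
        (Submodule.span (Polynomial k) {(Submodule.Quotient.mk (X ^ (h + 1 - 2)) : Bq k (h + 1))})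
        (iotaMap (h + 1) c hc3) ρ ?_ ?_ hρ ⟨_, Bq_mk_ne_zero (show 0 < h + 1 by omega)⟩ hM
      · intro p hp
        obtain ⟨r, rfl⟩ := Submodule.mem_span_singleton.mp hp
        rw [map_smul, iotaMap_mk, show h + 1 - 2 = t by omega, hc]
        exact M.A.smul_mem _ ha
      · intro p hp
        obtain ⟨r, hr⟩ := Bq_mem_span (s := 2) (by omega) (ρ p)
          (by rw [← map_smul, M.subBound p hp, map_zero])
        exact Submodule.mem_span_singleton.mpr ⟨r, hr.symm⟩
    · right
      have hb2 : (X : Polynomial k) ^ (h + 1) • b = 0 := by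
        rw [pow_succ', mul_smul, hb, hXXa]
      have hs : (X : Polynomial k) ^ (h - 1) • b + (X : Polynomial k) ^ t •
          (c - (X : Polynomial k) ^ (h - 1 - t) • b) = a := by
        rw [smul_sub, smul_smul, ← pow_add, show t + (h - 1 - t) = h - 1 by omega, hc]
        abel
      have hc2 : (X : Polynomial k) ^ (t + 1) • (c - (X : Polynomial k) ^ (h - 1 - t) • b) = 0 := by
        rw [pow_succ', mul_smul, eq_sub_of_add_eq' hs, smul_sub, smul_smul, ← pow_succ',
          show h - 1 + 1 = h by omega, hb, sub_self]
      obtain ⟨ρ, hρ, hρA⟩ := exists_rho4 M.A M.subBound (i := h + 1) (j := t + 1) (by omega) (by omega)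
        b _ a hb2 hc2 ha hs (by
          intro x y hy hxy
          have h1 : (X : Polynomial k) ^ (h + 1) • x =
              (X : Polynomial k) • (a - (X : Polynomial k) ^ (t + 1) • y) := by
            rw [smul_sub, hxy]; abel
          have h2 := hmax _ (sub_mem ha hy) x h1
          rw [smul_sub, sub_eq_zero] at h2
          exact ht ⟨_, hy, h2 ▸ hXa, ⟨b, hb.trans h2⟩, y, rfl⟩)
      refine ⟨h + 1, t + 1, by omega, by omega, by omega, by omega, fun _ _ _ => ?_⟩
      refine iso_of_split M (N := Bq k (h + 1) × Bq k (t + 1))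
        (Submodule.span (Polynomial k) {((Submodule.Quotient.mk (X ^ (h + 1 - 2)) : Bq k (h + 1)),
          (Submodule.Quotient.mk (X ^ (t + 1 - 1)) : Bq k (t + 1)))}) _ ρ ?_ ?_ hρ
        ⟨((Submodule.Quotient.mk (X ^ 0) : Bq k (h + 1)), (0 : Bq k (t + 1))), ?_⟩ hM
      · intro p hp
        obtain ⟨r, rfl⟩ := Submodule.mem_span_singleton.mp hp
        rw [map_smul]
        refine M.A.smul_mem _ ?_
        rw [LinearMap.coprod_apply, iotaMap_mk, iotaMap_mk]
        exact (congrArg (· ∈ M.A) hs).mpr ha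
      · intro p hp
        obtain ⟨r, hr⟩ := hρA p hp
        exact Submodule.mem_span_singleton.mpr ⟨r, hr.symm⟩
      · intro h0
        exact Bq_mk_ne_zero (show 0 < h + 1 by omega) (congrArg Prod.fst h0)

/-- Any nonzero submodule of `k[X]/(Xⁱ)` contains the socle. -/
theorem Bq_socle_mem {i : ℕ} (hi : 1 ≤ i) (U : Submodule (Polynomial k) (Bq k i)) (hU : U ≠ ⊥) :
    (Submodule.Quotient.mk (X ^ (i - 1)) : Bq k i) ∈ U := by
  obtain ⟨x, hx, hx0⟩ := Submodule.exists_mem_ne_zero_of_ne_bot hU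
  obtain ⟨t, ht, ht'⟩ := exists_socle_mul x hx0 (Bq_bound k le_rfl x)
  obtain ⟨c, hc⟩ := Bq_socle hi _ ht'
  have hc0 : c ≠ 0 := by
    rintro rfl
    rw [hc] at ht
    simp at ht
  have : (Submodule.Quotient.mk (X ^ (i - 1)) : Bq k i) =
      C c⁻¹ • (X : Polynomial k) ^ t • x := by
    rw [hc, smul_smul, ← C_mul, inv_mul_cancel₀ hc0, C_1, one_smul]
  rw [this]
  exact U.smul_mem _ (U.smul_mem _ hx)

theorem Bq_indec {i : ℕ} (hi : 1 ≤ i) (B₁ B₂ : Submodule (Polynomial k) (Bq k i))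
    (h : B₁ ⊓ B₂ = ⊥) : B₁ = ⊥ ∨ B₂ = ⊥ := by
  by_contra hcon
  push Not at hcon
  have h1 := Bq_socle_mem hi B₁ hcon.1
  have h2 := Bq_socle_mem hi B₂ hcon.2
  have : (Submodule.Quotient.mk (X ^ (i - 1)) : Bq k i) ∈ B₁ ⊓ B₂ := ⟨h1, h2⟩
  rw [h, Submodule.mem_bot] at this
  exact Bq_mk_ne_zero (by omega) this

theorem Bq_indec' {i : ℕ} (hi : 1 ≤ i) {m n : ℕ} (h : i ≤ n) (A : Submodule (Polynomial k) (Bq k i))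
    (hA : ∀ a ∈ A, (X : Polynomial k) ^ m • a = 0) :
    (SPair.mk (m := m) (n := n) (Bq k i) (fun b => Bq_bound k h b) A hA).Indec :=
  ⟨⟨_, Bq_mk_ne_zero (show 0 < i by omega)⟩, fun B₁ B₂ h1 _ _ => Bq_indec hi B₁ B₂ h1⟩

/-- Key step for the indecomposability of the two-summand pairs. -/
theorem prod_indec_aux {i j : ℕ} (hj : 1 ≤ j) (hij : j + 2 ≤ i)
    (B₁ B₂ : Submodule (Polynomial k) (Bq k i × Bq k j)) (h1 : B₁ ⊓ B₂ = ⊥) (h2 : B₁ ⊔ B₂ = ⊤)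
    (hg : ((Submodule.Quotient.mk (X ^ (i - 2)) : Bq k i),
          (Submodule.Quotient.mk (X ^ (j - 1)) : Bq k j)) ∈ B₁) : B₂ = ⊥ := by
  by_contra hB₂
  have hdis : ∀ x, x ∈ B₁ → x ∈ B₂ → x = 0 := by
    intro x hx hx'
    have : x ∈ B₁ ⊓ B₂ := ⟨hx, hx'⟩
    rwa [h1, Submodule.mem_bot] at this
  obtain ⟨x, hx, hx0⟩ := Submodule.exists_mem_ne_zero_of_ne_bot hB₂
  obtain ⟨t, ht, ht'⟩ := exists_socle_mul (k := k) (n := i) x hx0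
    (Prod.ext (Bq_bound k le_rfl x.1) (Bq_bound k (by omega : j ≤ i) x.2))
  have hs : (X : Polynomial k) ^ t • x ∈ B₂ := B₂.smul_mem _ hx
  generalize (X : Polynomial k) ^ t • x = s at *
  obtain ⟨y, z⟩ := s
  obtain ⟨α, rfl⟩ := Bq_socle (by omega : 1 ≤ i) y (congrArg Prod.fst ht')
  obtain ⟨β, rfl⟩ := Bq_socle hj z (congrArg Prod.snd ht')
  have hXg : ((Submodule.Quotient.mk (X ^ (i - 1)) : Bq k i), (0 : Bq k j)) ∈ B₁ := by
    have := B₁.smul_mem X hg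
    convert this using 1
    refine Prod.ext ?_ ?_
    · change _ = (X : Polynomial k) • (Submodule.Quotient.mk (X ^ (i - 2)) : Bq k i)
      rw [← Submodule.Quotient.mk_smul, smul_eq_mul, ← pow_succ', show i - 2 + 1 = i - 1 by omega]
    · change _ = (X : Polynomial k) • (Submodule.Quotient.mk (X ^ (j - 1)) : Bq k j)
      have := Bq_smul_mk k (i := j) (j := j - 1) (r := 1) (by omega)
      rw [pow_one] at this
      exact this.symm
  have hβ : β ≠ 0 := by
    rintro rfl
    apply ht
    apply hdis _ _ hs
    have := B₁.smul_mem (C α) hXg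
    convert this using 1
    refine Prod.ext rfl ?_
    change (C (0 : k)) • _ = C α • (0 : Bq k j)
    simp
  -- write `β g - s = X^(i-2) u`
  obtain ⟨p₁, hp₁, p₂, hp₂, hp⟩ := Submodule.mem_sup.mp
    (show ((Submodule.Quotient.mk (C β - C α * X) : Bq k i), (0 : Bq k j)) ∈ B₁ ⊔ B₂ by
      rw [h2]; trivial)
  have hu : (X : Polynomial k) ^ (i - 2) •
      ((Submodule.Quotient.mk (C β - C α * X) : Bq k i), (0 : Bq k j)) =
      C β • ((Submodule.Quotient.mk (X ^ (i - 2)) : Bq k i),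
          (Submodule.Quotient.mk (X ^ (j - 1)) : Bq k j)) -
      (C α • (Submodule.Quotient.mk (X ^ (i - 1)) : Bq k i),
        C β • (Submodule.Quotient.mk (X ^ (j - 1)) : Bq k j)) := by
    refine Prod.ext ?_ ?_
    · change (X : Polynomial k) ^ (i - 2) • (Submodule.Quotient.mk (C β - C α * X) : Bq k i) =
        C β • (Submodule.Quotient.mk (X ^ (i - 2)) : Bq k i) -
        C α • (Submodule.Quotient.mk (X ^ (i - 1)) : Bq k i)
      rw [← Submodule.Quotient.mk_smul, ← Submodule.Quotient.mk_smul, ← Submodule.Quotient.mk_smul,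
        ← Submodule.Quotient.mk_sub]
      congr 1
      simp only [smul_eq_mul]
      rw [show i - 1 = i - 2 + 1 by omega, pow_succ]
      ring
    · change (X : Polynomial k) ^ (i - 2) • (0 : Bq k j) =
        C β • (Submodule.Quotient.mk (X ^ (j - 1)) : Bq k j) -
        C β • (Submodule.Quotient.mk (X ^ (j - 1)) : Bq k j)
      rw [smul_zero, sub_self]
  rw [← hp, smul_add] at hu
  have hz : (X : Polynomial k) ^ (i - 2) • p₁ -
      C β • ((Submodule.Quotient.mk (X ^ (i - 2)) : Bq k i),
          (Submodule.Quotient.mk (X ^ (j - 1)) : Bq k j)) = 0 := by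
    apply hdis
    · exact sub_mem (B₁.smul_mem _ hp₁) (B₁.smul_mem _ hg)
    · have : (X : Polynomial k) ^ (i - 2) • p₁ -
          C β • ((Submodule.Quotient.mk (X ^ (i - 2)) : Bq k i),
          (Submodule.Quotient.mk (X ^ (j - 1)) : Bq k j)) =
          -((C α • (Submodule.Quotient.mk (X ^ (i - 1)) : Bq k i),
        C β • (Submodule.Quotient.mk (X ^ (j - 1)) : Bq k j))) - (X : Polynomial k) ^ (i - 2) • p₂ := by
        rw [eq_sub_of_add_eq hu]
        abel
      rw [this]
      exact sub_mem (neg_mem hs) (B₂.smul_mem _ hp₂)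
  have hz2 : (X : Polynomial k) ^ (i - 2) • p₁.2 -
      C β • (Submodule.Quotient.mk (X ^ (j - 1)) : Bq k j) = 0 := congrArg Prod.snd hz
  rw [Bq_bound k (by omega : j ≤ i - 2), zero_sub, neg_eq_zero] at hz2
  apply Bq_mk_ne_zero (k := k) (show j - 1 < j by omega)
  have := congrArg (fun w => C β⁻¹ • w) hz2
  simp only [smul_smul, ← C_mul, inv_mul_cancel₀ hβ, C_1, one_smul, smul_zero] at this
  exact this

theorem prod_indec {i j : ℕ} (hj : 1 ≤ j) (hij : j + 2 ≤ i)
    (B₁ B₂ : Submodule (Polynomial k) (Bq k i × Bq k j)) (h1 : B₁ ⊓ B₂ = ⊥) (h2 : B₁ ⊔ B₂ = ⊤)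
    (hA : ((Submodule.Quotient.mk (X ^ (i - 2)) : Bq k i),
          (Submodule.Quotient.mk (X ^ (j - 1)) : Bq k j)) ∈
        Submodule.span (Polynomial k) {((Submodule.Quotient.mk (X ^ (i - 2)) : Bq k i),
          (Submodule.Quotient.mk (X ^ (j - 1)) : Bq k j))} ⊓ B₁ ⊔
        Submodule.span (Polynomial k) {((Submodule.Quotient.mk (X ^ (i - 2)) : Bq k i),
          (Submodule.Quotient.mk (X ^ (j - 1)) : Bq k j))} ⊓ B₂) : B₁ = ⊥ ∨ B₂ = ⊥ := by
  have hg2 : (X : Polynomial k) ^ 2 • ((Submodule.Quotient.mk (X ^ (i - 2)) : Bq k i),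
          (Submodule.Quotient.mk (X ^ (j - 1)) : Bq k j)) = 0 :=
    Prod.ext (Bq_smul_mk k (by omega)) (Bq_smul_mk k (by omega))
  have hg := prod_indec_aux hj hij B₁ B₂ h1 h2
  have hg' := prod_indec_aux hj hij B₂ B₁ (by rw [inf_comm]; exact h1) (by rw [sup_comm]; exact h2)
  have hgne : ((Submodule.Quotient.mk (X ^ (i - 2)) : Bq k i),
          (Submodule.Quotient.mk (X ^ (j - 1)) : Bq k j)) ≠ 0 := fun h =>
    Bq_mk_ne_zero (show i - 2 < i by omega) (congrArg Prod.fst h)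
  generalize ((Submodule.Quotient.mk (X ^ (i - 2)) : Bq k i),
          (Submodule.Quotient.mk (X ^ (j - 1)) : Bq k j)) = g at *
  -- a multiple `r g` with `r.coeff 0 ≠ 0` generates `g`
  have hunit : ∀ r : Polynomial k, r.coeff 0 ≠ 0 → ∃ q : Polynomial k, q • r • g = g := by
    intro r hr
    have hcop : IsCoprime ((X : Polynomial k) ^ 2) r :=
      IsCoprime.pow_left ((Polynomial.prime_X.coprime_iff_not_dvd).mpr (by rwa [X_dvd_iff]))
    obtain ⟨u, v, huv⟩ := hcop
    refine ⟨v, ?_⟩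
    have := congrArg (fun w => w • g) huv
    simp only [add_smul, one_smul, mul_smul, hg2, smul_zero, zero_add] at this
    exact this
  obtain ⟨a₁, ⟨ha₁, hb₁⟩, a₂, ⟨ha₂, hb₂⟩, hsum⟩ := Submodule.mem_sup.mp hA
  obtain ⟨r, rfl⟩ := Submodule.mem_span_singleton.mp ha₁
  obtain ⟨s, rfl⟩ := Submodule.mem_span_singleton.mp ha₂
  by_cases hr : r.coeff 0 = 0
  · by_cases hs : s.coeff 0 = 0
    · exfalso
      obtain ⟨q, hq⟩ := hunit (1 - r - s) (by simp [hr, hs])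
      apply hgne
      rw [← hq, sub_smul, sub_smul, one_smul, sub_sub, hsum, sub_self, smul_zero]
    · left
      obtain ⟨q, hq⟩ := hunit s hs
      exact hg' (hq ▸ B₂.smul_mem q hb₂)
  · right
    obtain ⟨q, hq⟩ := hunit r hr
    exact hg (hq ▸ B₁.smul_mem q hb₁)

theorem pairProd_indec {n i j : ℕ} (hj : 1 ≤ j) (hij : j + 2 ≤ i) (hi : i ≤ n) (hjn : j ≤ n)
    (ha : i ≤ i - 2 + 2) (hb : j ≤ j - 1 + 2) :
    (pairProd k 2 n i j (i - 2) (j - 1) hi hjn ha hb).Indec := by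
  refine ⟨⟨((Submodule.Quotient.mk (X ^ 0) : Bq k i), (0 : Bq k j)), ?_⟩, ?_⟩
  · intro h0
    exact Bq_mk_ne_zero (show 0 < i by omega) (congrArg Prod.fst h0)
  · intro B₁ B₂ h1 h2 h3
    refine prod_indec hj hij B₁ B₂ h1 h2 ?_
    exact h3.le (Submodule.mem_span_singleton_self (R := Polynomial k) (M := Bq k i × Bq k j) _)

/-! ### Non-isomorphism -/

theorem Bq_exp {i t : ℕ} (h : ∀ x : Bq k i, (X : Polynomial k) ^ t • x = 0) : i ≤ t := by
  by_contra hlt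
  push Not at hlt
  apply Bq_mk_ne_zero (k := k) hlt
  have := h (Submodule.Quotient.mk 1)
  rw [← Submodule.Quotient.mk_smul, smul_eq_mul, mul_one] at this
  exact this

theorem Bq_equiv {i i' : ℕ} (e : Bq k i ≃ₗ[Polynomial k] Bq k i') : i = i' := by
  have := (e.restrictScalars k).finrank_eq
  rwa [Bq_finrank, Bq_finrank] at this

theorem BqProd_finrank (i j : ℕ) : Module.finrank k (Bq k i × Bq k j) = i + j := by
  have := Bq_finite (k := k) i
  have := Bq_finite (k := k) j
  rw [Module.finrank_prod, Bq_finrank, Bq_finrank]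

theorem Bq_equiv_prod {i i' j' : ℕ} (hj : 1 ≤ j') (hij : j' ≤ i')
    (e : Bq k i ≃ₗ[Polynomial k] (Bq k i' × Bq k j')) : False := by
  have h := (e.restrictScalars k).finrank_eq
  rw [Bq_finrank, BqProd_finrank] at h
  have : i ≤ i' := Bq_exp (k := k) fun x => by
    apply e.injective
    rw [map_smul, map_zero]
    exact Prod.ext (Bq_bound k le_rfl _) (Bq_bound k hij _)
  omega

theorem BqProd_exp {i j i' j' : ℕ} (hij : j' ≤ i')
    (e : (Bq k i × Bq k j) ≃ₗ[Polynomial k] (Bq k i' × Bq k j')) : i ≤ i' := by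
  refine Bq_exp (k := k) fun x => ?_
  have : (X : Polynomial k) ^ i' • ((x, 0) : Bq k i × Bq k j) = 0 := by
    apply e.injective
    rw [map_smul, map_zero]
    exact Prod.ext (Bq_bound k le_rfl _) (Bq_bound k hij _)
  exact congrArg Prod.fst this

theorem BqProd_equiv {i j i' j' : ℕ} (hij : j ≤ i) (hij' : j' ≤ i')
    (e : (Bq k i × Bq k j) ≃ₗ[Polynomial k] (Bq k i' × Bq k j')) : (i, j) = (i', j') := by
  have h := (e.restrictScalars k).finrank_eq
  rw [BqProd_finrank, BqProd_finrank] at h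
  have h1 := BqProd_exp hij' e
  have h2 := BqProd_exp hij e.symm
  rw [Prod.mk.injEq]
  omega

theorem zero_not_iso_cyc {n i i' a : ℕ} (hi : i ≤ n) (hi' : i' ≤ n) (ha : i' ≤ a + 2) (hai : a < i') :
    ¬ (pairZero k 2 n i hi).Iso (pairCyc k 2 n i' a hi' ha) := by
  rintro ⟨e, he⟩
  have he2 : (⊥ : Submodule (Polynomial k) (Bq k i')) =
      Submodule.span (Polynomial k) {(Submodule.Quotient.mk (X ^ a) : Bq k i')} :=
    (Submodule.map_bot e.toLinearMap).symm.trans he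
  exact Bq_mk_ne_zero hai (Submodule.span_singleton_eq_bot.mp he2.symm)

theorem cyc_not_iso_cyc {n i i' : ℕ} (hi : i ≤ n) (hi' : i' ≤ n) (h2 : 2 ≤ i')
    (ha : i ≤ i - 1 + 2) (ha' : i' ≤ i' - 2 + 2) :
    ¬ (pairCyc k 2 n i (i - 1) hi ha).Iso (pairCyc k 2 n i' (i' - 2) hi' ha') := by
  rintro ⟨e, he⟩
  have hm : (Submodule.Quotient.mk (X ^ (i' - 2)) : Bq k i') ∈
      (pairCyc k 2 n i' (i' - 2) hi' ha').A := Submodule.mem_span_singleton_self _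
  rw [← he] at hm
  obtain ⟨x, hx, hxe⟩ := hm
  have hx0 : (X : Polynomial k) • x = 0 := by
    have := span_smul_eq_zero (k := k) (B := Bq k i) X (S := {Submodule.Quotient.mk (X ^ (i - 1))})
      (fun v hv => by
        rw [Set.mem_singleton_iff] at hv
        have := Bq_smul_mk k (i := i) (j := i - 1) (r := 1) (by omega)
        rw [pow_one] at this
        rw [hv, this])
    exact this x hx
  have h0 : (X : Polynomial k) • (Submodule.Quotient.mk (X ^ (i' - 2)) : Bq k i') = 0 := by
    rw [← hxe]
    exact (map_smul e X x).symm.trans ((congrArg e hx0).trans (map_zero e))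
  rw [← Submodule.Quotient.mk_smul, smul_eq_mul, ← pow_succ'] at h0
  exact Bq_mk_ne_zero (by omega) h0

end Helpers

/-- **Proposition 9 (classification for `m = 2`).** For `n > 2`, the `n(n+3)/2` pairs
`(0 ⊆ Bᵢ)` (`1 ≤ i ≤ n`), `(⟨Xⁱ⁻¹⟩ ⊆ Bᵢ)` (`1 ≤ i ≤ n`), `(⟨Xⁱ⁻²⟩ ⊆ Bᵢ)` (`2 ≤ i ≤ n`) and
`(⟨(Xⁱ⁻², Xʲ⁻¹)⟩ ⊆ Bᵢ ⊕ Bⱼ)` (`3 ≤ i ≤ n`, `1 ≤ j ≤ i - 2`), where `Bᵢ = k[X]/(Xⁱ)`, are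
indecomposable objects of `S₂(k[T]/Tⁿ)`, pairwise non-isomorphic, and every indecomposable
object of `S₂(k[T]/Tⁿ)` is isomorphic to one of them.  In particular `S₂(k[T]/Tⁿ)` has
exactly `n(n+3)/2` isomorphism classes of indecomposable objects. -/
theorem classification_S2 (k : Type) [Field k] (n : ℕ) (hn : 2 < n) :
    -- the listed pairs are indecomposable objects of S₂(k[T]/Tⁿ)
    (∀ i (h1 : 1 ≤ i) (hi : i ≤ n), (pairZero k 2 n i hi).Indec) ∧
    (∀ i (h1 : 1 ≤ i) (hi : i ≤ n), (pairCyc k 2 n i (i - 1) hi (by omega)).Indec) ∧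
    (∀ i (h2 : 2 ≤ i) (hi : i ≤ n), (pairCyc k 2 n i (i - 2) hi (by omega)).Indec) ∧
    (∀ i j (h3 : 3 ≤ i) (hi : i ≤ n) (hj1 : 1 ≤ j) (hj2 : j ≤ i - 2),
      (pairProd k 2 n i j (i - 2) (j - 1) hi (by omega) (by omega) (by omega)).Indec) ∧
    -- they are pairwise non-isomorphic
    (∀ i i' (h1 : 1 ≤ i) (hi : i ≤ n) (h1' : 1 ≤ i') (hi' : i' ≤ n), i ≠ i' →
      ¬ (pairZero k 2 n i hi).Iso (pairZero k 2 n i' hi')) ∧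
    (∀ i i' (h1 : 1 ≤ i) (hi : i ≤ n) (h1' : 1 ≤ i') (hi' : i' ≤ n), i ≠ i' →
      ¬ (pairCyc k 2 n i (i - 1) hi (by omega)).Iso (pairCyc k 2 n i' (i' - 1) hi' (by omega))) ∧
    (∀ i i' (h2 : 2 ≤ i) (hi : i ≤ n) (h2' : 2 ≤ i') (hi' : i' ≤ n), i ≠ i' →
      ¬ (pairCyc k 2 n i (i - 2) hi (by omega)).Iso (pairCyc k 2 n i' (i' - 2) hi' (by omega))) ∧
    (∀ i j i' j' (h3 : 3 ≤ i) (hi : i ≤ n) (hj1 : 1 ≤ j) (hj2 : j ≤ i - 2)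
        (h3' : 3 ≤ i') (hi' : i' ≤ n) (hj1' : 1 ≤ j') (hj2' : j' ≤ i' - 2),
      (i, j) ≠ (i', j') →
      ¬ (pairProd k 2 n i j (i - 2) (j - 1) hi (by omega) (by omega) (by omega)).Iso
          (pairProd k 2 n i' j' (i' - 2) (j' - 1) hi' (by omega) (by omega) (by omega))) ∧
    (∀ i i' (h1 : 1 ≤ i) (hi : i ≤ n) (h1' : 1 ≤ i') (hi' : i' ≤ n),
      ¬ (pairZero k 2 n i hi).Iso (pairCyc k 2 n i' (i' - 1) hi' (by omega))) ∧
    (∀ i i' (h1 : 1 ≤ i) (hi : i ≤ n) (h2' : 2 ≤ i') (hi' : i' ≤ n),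
      ¬ (pairZero k 2 n i hi).Iso (pairCyc k 2 n i' (i' - 2) hi' (by omega))) ∧
    (∀ i i' j' (h1 : 1 ≤ i) (hi : i ≤ n)
        (h3' : 3 ≤ i') (hi' : i' ≤ n) (hj1' : 1 ≤ j') (hj2' : j' ≤ i' - 2),
      ¬ (pairZero k 2 n i hi).Iso
          (pairProd k 2 n i' j' (i' - 2) (j' - 1) hi' (by omega) (by omega) (by omega))) ∧
    (∀ i i' (h1 : 1 ≤ i) (hi : i ≤ n) (h2' : 2 ≤ i') (hi' : i' ≤ n),
      ¬ (pairCyc k 2 n i (i - 1) hi (by omega)).Iso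
          (pairCyc k 2 n i' (i' - 2) hi' (by omega))) ∧
    (∀ i i' j' (h1 : 1 ≤ i) (hi : i ≤ n)
        (h3' : 3 ≤ i') (hi' : i' ≤ n) (hj1' : 1 ≤ j') (hj2' : j' ≤ i' - 2),
      ¬ (pairCyc k 2 n i (i - 1) hi (by omega)).Iso
          (pairProd k 2 n i' j' (i' - 2) (j' - 1) hi' (by omega) (by omega) (by omega))) ∧
    (∀ i i' j' (h2 : 2 ≤ i) (hi : i ≤ n)
        (h3' : 3 ≤ i') (hi' : i' ≤ n) (hj1' : 1 ≤ j') (hj2' : j' ≤ i' - 2),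
      ¬ (pairCyc k 2 n i (i - 2) hi (by omega)).Iso
          (pairProd k 2 n i' j' (i' - 2) (j' - 1) hi' (by omega) (by omega) (by omega))) ∧
    -- every indecomposable object of S₂(k[T]/Tⁿ) is isomorphic to one of them
    (∀ M : SPair k 2 n, M.Indec →
      (∃ i, ∃ (_ : 1 ≤ i) (hi : i ≤ n), M.Iso (pairZero k 2 n i hi)) ∨
      (∃ i, ∃ (_ : 1 ≤ i) (hi : i ≤ n), M.Iso (pairCyc k 2 n i (i - 1) hi (by omega))) ∨
      (∃ i, ∃ (_ : 2 ≤ i) (hi : i ≤ n), M.Iso (pairCyc k 2 n i (i - 2) hi (by omega))) ∨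
      (∃ i j, ∃ (_ : 3 ≤ i) (hi : i ≤ n) (_ : 1 ≤ j) (hj2 : j ≤ i - 2),
        M.Iso (pairProd k 2 n i j (i - 2) (j - 1) hi (by omega) (by omega) (by omega)))) := by
  refine ⟨fun i h1 hi => Bq_indec' h1 hi _ _, fun i h1 hi => Bq_indec' h1 hi _ _,
    fun i h2 hi => Bq_indec' (by omega) hi _ _,
    fun i j h3 hi hj1 hj2 => pairProd_indec hj1 (by omega) hi _ _ _, ?_, ?_, ?_, ?_, ?_, ?_, ?_, ?_,
    ?_, ?_, ?_⟩
  · rintro i i' h1 hi h1' hi' hne ⟨e, he⟩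
    exact hne (Bq_equiv e)
  · rintro i i' h1 hi h1' hi' hne ⟨e, he⟩
    exact hne (Bq_equiv e)
  · rintro i i' h1 hi h1' hi' hne ⟨e, he⟩
    exact hne (Bq_equiv e)
  · rintro i j i' j' h3 hi hj1 hj2 h3' hi' hj1' hj2' hne ⟨e, he⟩
    exact hne (BqProd_equiv (by omega) (by omega) e)
  · intro i i' h1 hi h1' hi'
    exact zero_not_iso_cyc _ _ _ (by omega)
  · intro i i' h1 hi h1' hi'
    exact zero_not_iso_cyc _ _ _ (by omega)
  · rintro i i' j' h1 hi h3' hi' hj1' hj2' ⟨e, he⟩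
    exact Bq_equiv_prod hj1' (by omega) e
  · intro i i' h1 hi h2' hi'
    exact cyc_not_iso_cyc _ _ h2' _ _
  · rintro i i' j' h1 hi h3' hi' hj1' hj2' ⟨e, he⟩
    exact Bq_equiv_prod hj1' (by omega) e
  · rintro i i' j' h1 hi h3' hi' hj1' hj2' ⟨e, he⟩
    exact Bq_equiv_prod hj1' (by omega) e
  · intro M hM
    rcases classify M hM with h | ⟨i, h1, hi, h⟩ | ⟨i, h1, hi, h⟩ | ⟨i, j, h3, hi, hj1, hj2, h⟩
    · exact Or.inl h
    · exact Or.inr (Or.inl ⟨i, h1, hi, h _⟩)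
    · exact Or.inr (Or.inr (Or.inl ⟨i, h1, hi, h _⟩))
    · exact Or.inr (Or.inr (Or.inr ⟨i, j, h3, hi, hj1, hj2, h _ _ _⟩))

end
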